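/- arXiv:1901.06029 — 2 statements merged into one kernel-verified Lean document; each statement's English description precedes it below -/
import Mathlib

section
/- Let $k \ge 2$ and let $p_1, \ldots, p_k$ be nonnegative reals with $\sum_{i=1}^k p_i = 1$. Then $(k^k - k) \prod_{i=1}^k p_i + \sum_{i=1}^k p_i^k \le 1$. -/
/-!
Expand `(∑ a, q a) ^ n` into monomials `∏ i, q (w i)` indexed by the words `w : Fin n → α`. The
constant words give the pure powers. By symmetry every `q a` occurs equally often in the product of
the remaining monomials, so their geometric mean is `g = (∏ a, q a) ^ (n / card α)`, and AM-GM
bounds their sum below by `g` times their number. For `n = card α` this is `g = ∏ a, q a`.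
-/

open Finset

theorem card_mul_le_sum_of_pow_card_le_prod {ι : Type*} {s : Finset ι} {x : ι → ℝ} {g : ℝ}
    (hx : ∀ i ∈ s, 0 ≤ x i) (hg : 0 ≤ g) (hgx : g ^ #s ≤ ∏ i ∈ s, x i) :
    #s * g ≤ ∑ i ∈ s, x i := by
  obtain rfl | hs := s.eq_empty_or_nonempty
  · simp
  have hcard : (0 : ℝ) < #s := by exact_mod_cast hs.card_pos
  have amgm := Real.geom_mean_le_arith_mean s (fun _ ↦ 1) x (by simp) (by simpa using hcard) hx
  simp only [Real.rpow_one, sum_const, nsmul_eq_mul, mul_one, one_mul] at amgm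
  rw [← le_div_iff₀' hcard]
  calc
    g = (g ^ #s) ^ (#s : ℝ)⁻¹ := (Real.pow_rpow_inv_natCast hg hs.card_pos.ne').symm
    _ ≤ (∏ i ∈ s, x i) ^ (#s : ℝ)⁻¹ := by gcongr
    _ ≤ (∑ i ∈ s, x i) / #s := amgm

section Words

variable {α : Type*} [Fintype α] {n : ℕ}

theorem prod_words_apply {M : Type*} [CommMonoid M] (q : α → M) (i : Fin n) :
    ∏ w : Fin n → α, q (w i) = (∏ a, q a) ^ Fintype.card α ^ (n - 1) := by
  have h := Fintype.sum_piFinset_apply (α := Additive M) q univ i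
  rw [Fintype.piFinset_univ, Fintype.card_fin] at h
  exact h

theorem prod_words_prod_apply {M : Type*} [CommMonoid M] (q : α → M) :
    ∏ w : Fin n → α, ∏ i, q (w i) = ((∏ a, q a) ^ n) ^ Fintype.card α ^ (n - 1) := by
  rw [prod_comm]
  simp only [prod_words_apply, prod_const, card_univ, Fintype.card_fin]
  exact pow_right_comm _ _ _

variable [DecidableEq α]

/-- The nonconstant words of length `n` over the alphabet `α`. They index the mixed monomials of
`(∑ a, q a) ^ n`, the word `w` standing for `∏ i, q (w i)`. -/
def nonconstantWords (n : ℕ) (α : Type*) [Fintype α] [DecidableEq α] : Finset (Fin n → α) :=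
  (univ.image (Function.const (Fin n)))ᶜ

variable [NeZero n]

@[to_additive]
theorem prod_const_mul_prod_nonconstantWords {M : Type*} [CommMonoid M] (F : (Fin n → α) → M) :
    (∏ a, F (Function.const _ a)) * ∏ w ∈ nonconstantWords n α, F w = ∏ w, F w := by
  rw [← prod_mul_prod_compl (univ.image (Function.const (Fin n))),
    prod_image Function.const_injective.injOn, nonconstantWords]

theorem sum_pow_add_sum_nonconstantWords {R : Type*} [CommSemiring R] (q : α → R) :
    ∑ a, q a ^ n + ∑ w ∈ nonconstantWords n α, ∏ i, q (w i) = (∑ a, q a) ^ n := by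
  simpa [Fintype.sum_pow] using sum_const_add_sum_nonconstantWords fun w : Fin n → α ↦ ∏ i, q (w i)

theorem card_add_card_nonconstantWords :
    Fintype.card α + #(nonconstantWords n α) = Fintype.card α ^ n := by
  simpa using sum_pow_add_sum_nonconstantWords (n := n) fun _ : α ↦ (1 : ℕ)

theorem prod_nonconstantWords_eq_pow_card {M : Type*} [CommMonoidWithZero M] [IsCancelMulZero M]
    {q : α → M} {g : M} (hg : g ≠ 0) (hgq : g ^ Fintype.card α = (∏ a, q a) ^ n) :
    ∏ w ∈ nonconstantWords n α, ∏ i, q (w i) = g ^ #(nonconstantWords n α) := by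
  refine mul_left_cancel₀ (pow_ne_zero (Fintype.card α) hg) ?_
  calc
    g ^ Fintype.card α * ∏ w ∈ nonconstantWords n α, ∏ i, q (w i)
      = ∏ w : Fin n → α, ∏ i, q (w i) := by
        simpa [hgq, prod_pow] using
          prod_const_mul_prod_nonconstantWords fun w : Fin n → α ↦ ∏ i, q (w i)
    _ = (g ^ Fintype.card α) ^ Fintype.card α ^ (n - 1) := by rw [prod_words_prod_apply, hgq]
    _ = g ^ Fintype.card α ^ n := by rw [← pow_mul, mul_pow_sub_one (NeZero.ne n)]
    _ = g ^ Fintype.card α * g ^ #(nonconstantWords n α) := by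
        rw [← card_add_card_nonconstantWords, pow_add]

theorem card_nonconstantWords_mul_le_sum {q : α → ℝ} {g : ℝ} (hq : ∀ a, 0 ≤ q a) (hg : 0 ≤ g)
    (hgq : g ^ Fintype.card α = (∏ a, q a) ^ n) :
    #(nonconstantWords n α) * g ≤ ∑ w ∈ nonconstantWords n α, ∏ i, q (w i) := by
  have monomial_nonneg (w : Fin n → α) : 0 ≤ ∏ i, q (w i) := prod_nonneg fun i _ ↦ hq (w i)
  obtain rfl | hg_ne := eq_or_ne g 0
  · simpa using sum_nonneg fun w _ ↦ monomial_nonneg w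
  · exact card_mul_le_sum_of_pow_card_le_prod (fun w _ ↦ monomial_nonneg w) hg
      (prod_nonconstantWords_eq_pow_card hg_ne hgq).ge

end Words

theorem amgm_partition_inequality_general {α : Type*} [Fintype α] [Nonempty α] (n : ℕ)
    {q : α → ℝ} (hq : ∀ a, 0 ≤ q a) :
    ((Fintype.card α : ℝ) ^ n - Fintype.card α) * (∏ a, q a) ^ (n / Fintype.card α : ℝ)
      + ∑ a, q a ^ n ≤ (∑ a, q a) ^ n := by
  classical
  obtain rfl | hn := eq_or_ne n 0
  · simp
  have : NeZero n := ⟨hn⟩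
  have hP : 0 ≤ ∏ a, q a := prod_nonneg fun a _ ↦ hq a
  set g := (∏ a, q a) ^ (n / Fintype.card α : ℝ)
  have hgq : g ^ Fintype.card α = (∏ a, q a) ^ n := by
    rw [← Real.rpow_mul_natCast hP, div_mul_cancel₀ _ (by simp), Real.rpow_natCast]
  have hcard : (Fintype.card α : ℝ) ^ n - Fintype.card α = #(nonconstantWords n α) := by
    rw [sub_eq_iff_eq_add']
    exact_mod_cast card_add_card_nonconstantWords.symm
  rw [hcard, ← sum_pow_add_sum_nonconstantWords, add_comm]
  gcongr
  exact card_nonconstantWords_mul_le_sum hq (Real.rpow_nonneg hP _) hgq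

theorem amgm_partition_inequality (k : ℕ) (hk : 2 ≤ k) (q : Fin k → ℝ)
    (hq : ∀ i, 0 ≤ q i) (hsum : ∑ i, q i = 1) :
    ((k : ℝ) ^ k - k) * ∏ i, q i + ∑ i, (q i) ^ k ≤ 1 := by
  have : NeZero k := ⟨by lia⟩
  simpa [hsum] using amgm_partition_inequality_general k hq
end

section
/- If $s$ is a power of $k$ (say $s = k^t$, $t \ge 0$) and $k \ge 2$, then $g_k(s) = (s^k - s)/(k^k - k)$. -/
/-- `p n k` : maximum of `∏ q i` over partitions of `n` into `k` nonnegative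
parts each strictly less than `n` (so `p 0 0 = 1`). -/
noncomputable def p (n k : ℕ) : ℕ :=
  sSup {m | ∃ q : Fin k → ℕ, (∑ i, q i) = n ∧ (∀ i, q i < n) ∧ m = ∏ i, q i}

/-- The Erdős–Hajnal function `g k s`: `g k s = 0` for `s < k` and otherwise the
maximum of `∑ i, g k (s i) + ∏ i, s i` over nontrivial partitions of `s` into `k` parts. -/
noncomputable def g (k : ℕ) (s : ℕ) : ℕ :=
  Nat.strongRecOn s fun s ih =>
    if s < k then 0
    else sSup {m | ∃ q : Fin k → ℕ, ∃ h : ∀ i, q i < s,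
      (∑ i, q i) = s ∧ m = (∑ i, ih (q i) (h i)) + ∏ i, q i}

/-!
Write `d = k ^ k - k`. Expanding `(∑ i, q i) ^ k` over all maps `f` from the index set to itself,
the `k` constant maps contribute `∑ i, q i ^ k`. The remaining `d` maps are permuted by
post-composition with permutations of the index set, so in the product of their monomials
`∏ j, q (f j)` all variables have the same exponent, and AM-GM bounds the sum of these monomials
below by `d * ∏ i, q i`. Hence `∑ i, q i ^ k + d * ∏ i, q i ≤ (∑ i, q i) ^ k`, which is exactly
what the induction for `d * g k s ≤ s ^ k - s` needs. At powers of `k`, splitting into equal parts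
turns every inequality into an equality.
-/

open Finset

section PermInvariant

variable {ι : Type*} [Fintype ι]

theorem card_mul_card_filter_apply_eq {κ : Type*} [DecidableEq ι] {S : Finset (κ → ι)}
    (hS : ∀ σ : Equiv.Perm ι, ∀ f ∈ S, σ ∘ f ∈ S) (j : κ) (a : ι) :
    Fintype.card ι * #{f ∈ S | f j = a} = #S := by
  have card_le (b c : ι) : #{f ∈ S | f j = b} ≤ #{f ∈ S | f j = c} := by
    refine card_le_card_of_injOn (Equiv.swap b c ∘ ·) ?_ (Equiv.injective _).comp_left.injOn
    intro f hf
    obtain ⟨hfS, rfl⟩ := mem_filter.mp hf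
    exact mem_filter.mpr ⟨hS _ f hfS, Equiv.swap_apply_left _ _⟩
  calc
    Fintype.card ι * #{f ∈ S | f j = a} = ∑ b : ι, #{f ∈ S | f j = b} := by
      rw [sum_congr rfl fun b _ => (card_le b a).antisymm (card_le a b), sum_const, card_univ,
        smul_eq_mul]
    _ = #S := (card_eq_sum_card_fiberwise fun f _ => mem_univ (f j)).symm

theorem prod_prod_apply_eq_pow_card {M : Type*} [CommMonoid M] {S : Finset (ι → ι)}
    (hS : ∀ σ : Equiv.Perm ι, ∀ f ∈ S, σ ∘ f ∈ S) (q : ι → M) :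
    ∏ f ∈ S, ∏ j, q (f j) = (∏ i, q i) ^ #S := by
  classical
  obtain _ | ⟨⟨a⟩⟩ := isEmpty_or_nonempty ι
  · simp
  have card_fiber (j i : ι) : #{f ∈ S | f j = i} = #S / Fintype.card ι :=
    Nat.eq_div_of_mul_eq_right (Fintype.card_pos_iff.mpr ⟨a⟩).ne'
      (card_mul_card_filter_apply_eq hS j i)
  have prod_apply (j : ι) : ∏ f ∈ S, q (f j) = (∏ i, q i) ^ (#S / Fintype.card ι) := by
    rw [← prod_fiberwise' S (fun f => f j) q, ← prod_pow]
    simp only [prod_const, card_fiber]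
  rw [prod_comm, prod_congr rfl fun j _ => prod_apply j, prod_const, ← pow_mul, card_univ,
    Nat.div_mul_cancel (Dvd.intro _ (card_mul_card_filter_apply_eq hS a a))]

theorem card_mul_prod_le_sum_prod_apply {S : Finset (ι → ι)}
    (hS : ∀ σ : Equiv.Perm ι, ∀ f ∈ S, σ ∘ f ∈ S) {q : ι → ℝ} (hq : ∀ i, 0 ≤ q i) :
    #S * ∏ i, q i ≤ ∑ f ∈ S, ∏ j, q (f j) := by
  obtain rfl | hne := S.eq_empty_or_nonempty
  · simp
  have card_pos : (0 : ℝ) < #S := mod_cast hne.card_pos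
  have am_gm := Real.geom_mean_le_arith_mean S (fun _ => 1) (fun f => ∏ j, q (f j))
    (fun _ _ => zero_le_one) (by simpa using card_pos) fun f _ => prod_nonneg fun j _ => hq (f j)
  simp only [Real.rpow_one, sum_const, nsmul_eq_mul, mul_one, one_mul,
    prod_prod_apply_eq_pow_card hS] at am_gm
  rwa [Real.pow_rpow_inv_natCast (prod_nonneg fun i _ => hq i) hne.card_ne_zero,
    le_div_iff₀' card_pos] at am_gm

theorem sum_pow_card_add_mul_prod_le_pow_card {q : ι → ℝ} (hq : ∀ i, 0 ≤ q i) :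
    ∑ i, q i ^ Fintype.card ι +
        ((Fintype.card ι : ℝ) ^ Fintype.card ι - Fintype.card ι) * ∏ i, q i ≤
      (∑ i, q i) ^ Fintype.card ι := by
  classical
  have const_injective : Function.Injective (Function.const ι : ι → ι → ι) :=
    fun a _ h => congrFun h a
  let C : Finset (ι → ι) := univ.image (Function.const ι)
  have card_compl : (#Cᶜ : ℝ) = (Fintype.card ι : ℝ) ^ Fintype.card ι - Fintype.card ι := by
    rw [Finset.card_compl, Nat.cast_sub (card_le_univ C),
      card_image_of_injective _ const_injective, card_univ, Fintype.card_fun, Nat.cast_pow]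
  have compl_invariant (σ : Equiv.Perm ι) : ∀ f ∈ Cᶜ, σ ∘ f ∈ Cᶜ := by
    intro f
    contrapose
    simp only [C, mem_compl, not_not, mem_image, mem_univ, true_and]
    rintro ⟨a, ha⟩
    exact ⟨σ.symm a, funext fun j => σ.symm_apply_eq.mpr (congrFun ha j)⟩
  calc
    _ = ∑ f ∈ C, ∏ j, q (f j) + #Cᶜ * ∏ i, q i := by
      simp [C, sum_image const_injective.injOn, card_compl]
    _ ≤ ∑ f ∈ C, ∏ j, q (f j) + ∑ f ∈ Cᶜ, ∏ j, q (f j) := by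
      gcongr
      exact card_mul_prod_le_sum_prod_apply compl_invariant hq
    _ = ∏ _j : ι, ∑ i, q i := by
      rw [sum_add_sum_compl, prod_univ_sum, Fintype.piFinset_univ]
    _ = (∑ i, q i) ^ Fintype.card ι := by
      rw [prod_const, card_univ]

end PermInvariant

/-- The values of `∑ i, g k (q i) + ∏ i, q i` over the nontrivial partitions `q` of `s` into `k`
parts, whose maximum defines `g k s`. Parts may be `0`; nontrivial means that no part is all of
`s`. -/
def partitionValues (k s : ℕ) : Set ℕ :=
  {m | ∃ q : Fin k → ℕ, (∀ i, q i < s) ∧ ∑ i, q i = s ∧ ∑ i, g k (q i) + ∏ i, q i = m}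

theorem finite_partitionValues (k s : ℕ) : (partitionValues k s).Finite := by
  have finite_parts : {q : Fin k → ℕ | ∀ i, q i < s}.Finite :=
    Set.Finite.pi' fun _ => Set.finite_Iio s
  refine (finite_parts.image fun q => ∑ i, g k (q i) + ∏ i, q i).subset ?_
  rintro _ ⟨q, hlt, -, rfl⟩
  exact ⟨q, hlt, rfl⟩

theorem g_eq_ite (k s : ℕ) : g k s = if s < k then 0 else sSup (partitionValues k s) := by
  rw [g, Nat.strongRecOn_eq]
  simp only [partitionValues, exists_prop, eq_comm (b := _ + _), g]

theorem le_g {k s m : ℕ} (hks : k ≤ s) (hm : m ∈ partitionValues k s) : m ≤ g k s := by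
  rw [g_eq_ite, if_neg hks.not_gt]
  exact le_csSup (finite_partitionValues k s).bddAbove hm

theorem g_eq_zero_or_mem_partitionValues (k s : ℕ) :
    g k s = 0 ∨ g k s ∈ partitionValues k s := by
  rw [g_eq_ite]
  split_ifs with hsk
  · exact .inl rfl
  obtain hempty | hne := (partitionValues k s).eq_empty_or_nonempty
  · exact .inl (by rw [hempty, csSup_empty, bot_eq_zero])
  · exact .inr (Nat.sSup_mem hne (finite_partitionValues k s).bddAbove)

theorem mul_g_le_pow_sub {k : ℕ} (hk : k ≠ 0) (s : ℕ) :
    ((k : ℝ) ^ k - k) * g k s ≤ (s : ℝ) ^ k - s := by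
  induction s using Nat.strong_induction_on with
  | _ s ih =>
  obtain hzero | ⟨q, hlt, hsum, hval⟩ := g_eq_zero_or_mem_partitionValues k s
  · have le_pow : (s : ℝ) ≤ (s : ℝ) ^ k := mod_cast Nat.le_self_pow hk s
    simpa [hzero] using le_pow
  have sum_parts : ∑ i, (q i : ℝ) = s := mod_cast hsum
  have sum_pow_add_le :=
    sum_pow_card_add_mul_prod_le_pow_card fun i => Nat.cast_nonneg (α := ℝ) (q i)
  rw [Fintype.card_fin, sum_parts] at sum_pow_add_le
  calc
    ((k : ℝ) ^ k - k) * g k s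
      = ∑ i, ((k : ℝ) ^ k - k) * g k (q i) + ((k : ℝ) ^ k - k) * ∏ i, (q i : ℝ) := by
      rw [← hval, Nat.cast_add, Nat.cast_sum, Nat.cast_prod, mul_add, mul_sum]
    _ ≤ ∑ i, ((q i : ℝ) ^ k - q i) + ((k : ℝ) ^ k - k) * ∏ i, (q i : ℝ) := by
      gcongr with i
      exact ih (q i) (hlt i)
    _ ≤ (s : ℝ) ^ k - s := by
      rw [sum_sub_distrib, sum_parts]
      linarith

theorem mul_g_add_pow_le_g_mul {k r : ℕ} (hk : 1 < k) (hr : 0 < r) :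
    k * g k r + r ^ k ≤ g k (k * r) :=
  le_g (Nat.le_mul_of_pos_right k hr) ⟨fun _ => r, fun _ => lt_mul_of_one_lt_left hr hk, by simp⟩

theorem pow_sub_le_mul_g_pow {k : ℕ} (hk : 1 < k) (t : ℕ) :
    ((k : ℝ) ^ t) ^ k - (k : ℝ) ^ t ≤ ((k : ℝ) ^ k - k) * g k (k ^ t) := by
  have hd : (0 : ℝ) ≤ (k : ℝ) ^ k - k :=
    sub_nonneg.mpr (mod_cast Nat.le_self_pow (Nat.ne_zero_of_lt hk) k)
  induction t with
  | zero => simpa using mul_nonneg hd (Nat.cast_nonneg _)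
  | succ t ih =>
    have g_step : (k : ℝ) * g k (k ^ t) + ((k : ℝ) ^ t) ^ k ≤ g k (k ^ (t + 1)) := by
      rw [pow_succ']
      exact_mod_cast mul_g_add_pow_le_g_mul hk (pow_pos (Nat.zero_lt_of_lt hk) t)
    calc
      ((k : ℝ) ^ (t + 1)) ^ k - (k : ℝ) ^ (t + 1)
        = k * (((k : ℝ) ^ t) ^ k - (k : ℝ) ^ t) + ((k : ℝ) ^ k - k) * ((k : ℝ) ^ t) ^ k := by
        rw [pow_succ', mul_pow]
        ring
      _ ≤ k * (((k : ℝ) ^ k - k) * g k (k ^ t)) + ((k : ℝ) ^ k - k) * ((k : ℝ) ^ t) ^ k := by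
        gcongr
      _ = ((k : ℝ) ^ k - k) * (k * g k (k ^ t) + ((k : ℝ) ^ t) ^ k) := by ring
      _ ≤ ((k : ℝ) ^ k - k) * g k (k ^ (t + 1)) := by gcongr

theorem g_power_of_k (k t : ℕ) (hk : 2 ≤ k) :
    (g k (k ^ t) : ℝ) = (((k : ℝ) ^ t) ^ k - (k : ℝ) ^ t) / ((k : ℝ) ^ k - k) := by
  have hd : (0 : ℝ) < (k : ℝ) ^ k - k :=
    sub_pos.mpr (mod_cast lt_self_pow₀ hk hk)
  have upper : ((k : ℝ) ^ k - k) * g k (k ^ t) ≤ ((k : ℝ) ^ t) ^ k - (k : ℝ) ^ t :=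
    mod_cast mul_g_le_pow_sub (Nat.ne_zero_of_lt hk) (k ^ t)
  rw [eq_div_iff hd.ne', mul_comm]
  exact upper.antisymm (pow_sub_le_mul_g_pow hk t)
end
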